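/- arXiv:2605.09788 — 4 statements merged into one kernel-verified Lean document; each statement's English description precedes it below -/
import Mathlib

section
/- Let $n \ge 1$ and let $b_1,\dots,b_n$ be integers with $b_1 = 1$ and $b_i \ge 2$ for all $2 \le i \le n$. Then the tridiagonal matrix $M(b_1,\dots,b_n)$ is positive definite (i.e., the corresponding string of spheres is negative definite). -/
/-!
The quadratic form of `M(b 1, …, b n)` at `x` is
`x_n ^ 2 + ∑_{i < n} (x_i - x_{i+1}) ^ 2 + ∑_{i ≥ 2} (b_i - 2) x_i ^ 2`,
because `b 1 = 1`. It is therefore nonnegative, and where it vanishes the last coordinate is zero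
and consecutive coordinates agree, so `x = 0`. The decomposition is used one index at a time:
`tridiagForm_succ` gives the increment of the form when a coordinate is added,
`sq_le_tridiagForm` gives the bound `x_n ^ 2 ≤ Q(x)`, and `eq_zero_of_tridiagForm_nonpos` the
vanishing of `x`.
-/

/-- The `n × n` symmetric tridiagonal integer matrix with diagonal entries
`b 1, …, b n`, entries `-1` immediately above and below the diagonal, and `0`
elsewhere. -/
def tridiagM (n : ℕ) (b : ℕ → ℤ) : Matrix (Fin n) (Fin n) ℤ :=
  Matrix.of fun i j =>
    if (i : ℕ) = (j : ℕ) then b ((i : ℕ) + 1)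
    else if (i : ℕ) + 1 = (j : ℕ) ∨ (j : ℕ) + 1 = (i : ℕ) then -1
    else 0

/-- The real `(i, j)` entry of the tridiagonal matrix, with zero-based indices in `ℕ`. -/
def tridiagEntry (b : ℕ → ℤ) (i j : ℕ) : ℝ :=
  if i = j then (b (i + 1) : ℝ) else if i + 1 = j ∨ j + 1 = i then -1 else 0

/-- The quadratic form of `M(b 1, …, b n)` at the first `n` terms `y 0, …, y (n - 1)` of a
sequence. -/
def tridiagForm (b : ℕ → ℤ) (y : ℕ → ℝ) (n : ℕ) : ℝ :=
  ∑ i ∈ Finset.range n, ∑ j ∈ Finset.range n, y i * (tridiagEntry b i j * y j)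

lemma tridiagForm_one (b : ℕ → ℤ) (y : ℕ → ℝ) : tridiagForm b y 1 = b 1 * y 0 ^ 2 := by
  simp [tridiagForm, tridiagEntry]
  ring

lemma tridiagForm_succ (b : ℕ → ℤ) (y : ℕ → ℝ) (n : ℕ) :
    tridiagForm b y (n + 2) =
      tridiagForm b y (n + 1) + b (n + 2) * y (n + 1) ^ 2 - 2 * y n * y (n + 1) := by
  have hcol : ∑ i ∈ Finset.range (n + 1), y i * (tridiagEntry b i (n + 1) * y (n + 1)) =
      -(y n * y (n + 1)) := by
    rw [Finset.sum_range_succ, Finset.sum_eq_zero]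
    · simp [tridiagEntry]
    · intro i hi
      have := Finset.mem_range.1 hi
      simp [tridiagEntry, show i ≠ n + 1 by omega, show i ≠ n by omega,
        show n + 1 + 1 ≠ i by omega]
  have hrow : ∑ j ∈ Finset.range (n + 1), y (n + 1) * (tridiagEntry b (n + 1) j * y j) =
      -(y n * y (n + 1)) := by
    rw [← hcol]
    refine Finset.sum_congr rfl fun i hi => ?_
    have := Finset.mem_range.1 hi
    have hsymm : tridiagEntry b (n + 1) i = tridiagEntry b i (n + 1) := by
      simp only [tridiagEntry, show n + 1 ≠ i by omega, show i ≠ n + 1 by omega, if_false,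
        or_comm]
    rw [hsymm]
    ring
  have hdiag : tridiagEntry b (n + 1) (n + 1) = b (n + 2) := by simp [tridiagEntry]
  unfold tridiagForm
  rw [Finset.sum_range_succ]
  simp only [Finset.sum_range_succ _ (n + 1)]
  rw [Finset.sum_add_distrib, hcol, hrow, hdiag]
  ring

/-- Adding a coordinate with diagonal entry at least `2` increases the form minus the square of
the last coordinate by at least the square of the difference of the last two coordinates. -/
lemma tridiagForm_step {b : ℕ → ℤ} (y : ℕ → ℝ) {n : ℕ} (hb : 2 ≤ b (n + 2)) :
    tridiagForm b y (n + 1) - y n ^ 2 + (y n - y (n + 1)) ^ 2 + y (n + 1) ^ 2 ≤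
      tridiagForm b y (n + 2) := by
  have hb' : (2 : ℝ) ≤ b (n + 2) := by exact_mod_cast hb
  rw [tridiagForm_succ]
  nlinarith [mul_le_mul_of_nonneg_right hb' (sq_nonneg (y (n + 1)))]

lemma sq_le_tridiagForm {b : ℕ → ℤ} (hb1 : b 1 = 1) (y : ℕ → ℝ) (n : ℕ)
    (hb : ∀ i, 2 ≤ i → i ≤ n + 1 → 2 ≤ b i) : y n ^ 2 ≤ tridiagForm b y (n + 1) := by
  induction n with
  | zero => simp [tridiagForm_one, hb1]
  | succ n ih =>
    have h := ih fun i h2 hi => hb i h2 (by omega)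
    have hs := tridiagForm_step y (hb (n + 2) (by omega) le_rfl)
    linarith [sq_nonneg (y n - y (n + 1))]

lemma eq_zero_of_tridiagForm_nonpos {b : ℕ → ℤ} (hb1 : b 1 = 1) (y : ℕ → ℝ) (n : ℕ)
    (hb : ∀ i, 2 ≤ i → i ≤ n + 1 → 2 ≤ b i) (hQ : tridiagForm b y (n + 1) ≤ 0) :
    ∀ i ≤ n, y i = 0 := by
  induction n with
  | zero =>
    intro i hi
    obtain rfl : i = 0 := by omega
    have h := sq_le_tridiagForm hb1 y 0 hb
    exact pow_eq_zero_iff two_ne_zero |>.1 (le_antisymm (h.trans hQ) (sq_nonneg _))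
  | succ n ih =>
    have hb' : ∀ i, 2 ≤ i → i ≤ n + 1 → 2 ≤ b i := fun i h2 hi => hb i h2 (by omega)
    have h := sq_le_tridiagForm hb1 y n hb'
    have hs := tridiagForm_step y (hb (n + 2) (by omega) le_rfl)
    have hlast : y (n + 1) = 0 := by
      refine pow_eq_zero_iff two_ne_zero |>.1 (le_antisymm ?_ (sq_nonneg _))
      linarith [sq_nonneg (y n - y (n + 1))]
    have hQ' : tridiagForm b y (n + 1) ≤ 0 := by
      rw [hlast] at hs
      linarith
    intro i hi
    rcases Nat.lt_or_ge n i with hni | hni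
    · obtain rfl : i = n + 1 := by omega
      exact hlast
    · exact ih hb' hQ' i hni

/-- For `n ≥ 1` and integers `b 1, …, b n` with `b 1 = 1` and `b i ≥ 2` for all
`2 ≤ i ≤ n`, the tridiagonal matrix `M(b 1, …, b n)` is positive definite
(i.e., the corresponding string of spheres is negative definite). -/
theorem tridiag_posDef_of_first_eq_one
    (n : ℕ) (hn : 1 ≤ n) (b : ℕ → ℤ)
    (hb1 : b 1 = 1) (hb : ∀ i, 2 ≤ i → i ≤ n → 2 ≤ b i) :
    ((tridiagM n b).map ((↑) : ℤ → ℝ)).PosDef := by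
  obtain ⟨m, rfl⟩ : ∃ m, n = m + 1 := ⟨n - 1, by omega⟩
  have hentry : ∀ i j : Fin (m + 1),
      (tridiagM (m + 1) b).map ((↑) : ℤ → ℝ) i j = tridiagEntry b i j := by
    intro i j
    simp only [tridiagM, tridiagEntry, Matrix.map_apply, Matrix.of_apply]
    split_ifs <;> simp
  refine Matrix.PosDef.of_dotProduct_mulVec_pos ?_ ?_
  · ext i j
    rw [Matrix.conjTranspose_apply, hentry, hentry]
    simp only [tridiagEntry, star_trivial]
    by_cases h : (i : ℕ) = j
    · simp [h]
    · simp only [h, Ne.symm h, if_false, or_comm]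
  · intro x hx
    -- The vector is extended by zero to a sequence on `ℕ`.
    let y : ℕ → ℝ := fun i => if h : i < m + 1 then x ⟨i, h⟩ else 0
    have hy : ∀ i : Fin (m + 1), y i = x i := fun i => dif_pos i.isLt
    have hform : star x ⬝ᵥ ((tridiagM (m + 1) b).map ((↑) : ℤ → ℝ)).mulVec x =
        tridiagForm b y (m + 1) := by
      simp only [tridiagForm, Finset.sum_range, hy, dotProduct, Matrix.mulVec, hentry,
        Finset.mul_sum, star_trivial, Pi.star_apply]
    rw [hform]
    by_contra hneg
    refine hx (funext fun i => ?_)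
    rw [← hy i]
    exact eq_zero_of_tridiagForm_nonpos hb1 y m hb (not_lt.1 hneg) i (by omega)
end

section
/- Let $(b_1,\dots,b_n)$ be a list of integers, $n\ge 2$, such that there is exactly one index $k$ with $b_k = 1$ (that is, $b_k=1$ and $b_i \ne 1$ for all $i \ne k$). If a list $(b_1',\dots,b_m')$ with $m \ge 1$ is obtained from $(b_1,\dots,b_n)$ by a finite nonempty sequence of blowdowns, then at most two of the entries $b_i'$ are equal to $1$, and if exactly two entries equal $1$, then they occupy adjacent positions in the list. -/
/-!
The invariant is that all entries equal to `1` lie in a window of two adjacent positions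
(`OnesInWindow`). A string with a single `1` satisfies it, and any blowdown of a string satisfying it
satisfies it again (`OnesInWindow.blowdown`): the contracted `1` lies in the window, so an entry
equal to `1` other than this one must be one of its neighbours. The blowdown leaves the entries that
are not neighbours unchanged, hence different from `1`, and the (at most two) former neighbours,
whose values dropped by one, fit into a new window of two adjacent positions.
-/

/-- One blowdown of a string of spheres with negative self-intersection
sequence `L`: either a toric (interior) blowdown at an interior `1`-entry, or a
half-toric blowdown at a `1`-entry at the left or right endpoint. -/
def Blowdown (L L' : List ℤ) : Prop :=
  (∃ (L₁ : List ℤ) (x y : ℤ) (L₂ : List ℤ),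
      L = L₁ ++ x :: 1 :: y :: L₂ ∧ L' = L₁ ++ (x - 1) :: (y - 1) :: L₂) ∨
  (∃ (y : ℤ) (L₂ : List ℤ), L = 1 :: y :: L₂ ∧ L' = (y - 1) :: L₂) ∨
  (∃ (L₁ : List ℤ) (x : ℤ), L = L₁ ++ [x, 1] ∧ L' = L₁ ++ [x - 1])

/-- Every entry of `L` equal to `1` sits at position `i` or `i + 1` (counted from `0`). -/
def OnesInWindow (L : List ℤ) (i : ℕ) : Prop :=
  ∀ j : ℕ, L[j]? = some 1 → j = i ∨ j = i + 1

theorem OnesInWindow.of_count_le_one {L : List ℤ} (h : L.count 1 ≤ 1) :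
    ∃ i, OnesInWindow L i := by
  induction L with
  | nil => exact ⟨0, by simp [OnesInWindow]⟩
  | cons a t ih =>
    by_cases ha : a = 1
    · have ht : (1 : ℤ) ∉ t := by
        rw [← List.count_eq_zero]
        simp only [ha, List.count_cons_self] at h
        omega
      refine ⟨0, fun j hj => ?_⟩
      cases j with
      | zero => exact Or.inl rfl
      | succ j => exact absurd (List.mem_of_getElem? (by simpa using hj)) ht
    · rw [List.count_cons_of_ne (by simpa using ha)] at h
      obtain ⟨i, hi⟩ := ih h
      refine ⟨i + 1, fun j hj => ?_⟩
      cases j with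
      | zero => simp_all
      | succ j =>
        have := hi j (by simpa using hj)
        omega

theorem OnesInWindow.count_le_two {L : List ℤ} {i : ℕ} (h : OnesInWindow L i) :
    L.count 1 ≤ 2 ∧ (L.count 1 = 2 → L[i]? = some 1 ∧ L[i + 1]? = some 1) := by
  induction L generalizing i with
  | nil => simp
  | cons a t ih =>
    cases i with
    | zero =>
      cases t with
      | nil => grind
      | cons b t =>
        have ht : (1 : ℤ) ∉ t := by
          intro hmem
          obtain ⟨j, hj⟩ := List.mem_iff_getElem?.1 hmem
          have := h (j + 2) (by simpa using hj)
          omega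
        have := List.count_eq_zero.2 ht
        grind
    | succ i =>
      have ha : a ≠ 1 := fun ha => by
        have := h 0 (by simp [ha])
        omega
      have ht : OnesInWindow t i := fun j hj => by
        have := h (j + 1) (by simpa using hj)
        omega
      rw [List.count_cons_of_ne (by simpa using ha)]
      simpa using ih ht

/-- Confinement of the `1`s to two adjacent positions survives a blowdown; the new window starts
at the first of the former neighbours of the contracted entry. -/
theorem OnesInWindow.blowdown {L L' : List ℤ} {i : ℕ} (h : OnesInWindow L i)
    (hb : Blowdown L L') : ∃ i', OnesInWindow L' i' := by
  rcases hb with ⟨L₁, x, y, L₂, rfl, rfl⟩ | ⟨y, L₂, rfl, rfl⟩ | ⟨L₁, x, rfl, rfl⟩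
  · refine ⟨L₁.length, fun j hj => ?_⟩
    have hk := h (L₁.length + 1) (by simp)
    by_contra! hne
    rcases lt_or_ge j L₁.length with hlt | hge
    · rw [List.getElem?_append_left hlt] at hj
      have := h j (by rwa [List.getElem?_append_left hlt])
      omega
    · obtain ⟨d, rfl⟩ : ∃ d, j = L₁.length + (d + 2) := ⟨j - L₁.length - 2, by omega⟩
      rw [List.getElem?_append_right (by omega), Nat.add_sub_cancel_left] at hj
      have := h (L₁.length + (d + 3)) (by
        rw [List.getElem?_append_right (by omega), Nat.add_sub_cancel_left]
        simpa using hj)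
      omega
  · refine ⟨0, fun j hj => ?_⟩
    have hk := h 0 (by simp)
    cases j with
    | zero => exact Or.inl rfl
    | succ j =>
      have := h (j + 2) (by simpa using hj)
      omega
  · refine ⟨L₁.length, fun j hj => ?_⟩
    have hk := h (L₁.length + 1) (by simp)
    rcases lt_or_ge j L₁.length with hlt | hge
    · rw [List.getElem?_append_left hlt] at hj
      have := h j (by rwa [List.getElem?_append_left hlt])
      omega
    · have hlen := (List.getElem?_eq_some_iff.1 hj).1
      simp only [List.length_append, List.length_singleton] at hlen
      omega

/-- If a list `L` of integers of length `≥ 2` has exactly one entry equal to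
`1`, and `L'` (of length `≥ 1`) is obtained from `L` by a finite nonempty
sequence of blowdowns, then at most two entries of `L'` are equal to `1`, and
if exactly two entries equal `1` then they occupy adjacent positions. -/
theorem blowdown_at_most_two_ones_adjacent
    (L : List ℤ) (hn : 2 ≤ L.length) (hone : L.count 1 = 1)
    (L' : List ℤ) (hL' : Relation.TransGen Blowdown L L') (hm : 1 ≤ L'.length) :
    L'.count 1 ≤ 2 ∧
      (L'.count 1 = 2 → ∃ i : ℕ, L'[i]? = some 1 ∧ L'[i + 1]? = some 1) := by
  obtain ⟨i₀, h₀⟩ := OnesInWindow.of_count_le_one hone.le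
  have hinv : ∃ i, OnesInWindow L' i := by
    clear hm
    induction hL' with
    | single hb => exact h₀.blowdown hb
    | tail _ hb ih =>
      obtain ⟨i, hi⟩ := ih
      exact hi.blowdown hb
  obtain ⟨i, hi⟩ := hinv
  exact ⟨hi.count_le_two.1, fun h2 => ⟨i, hi.count_le_two.2 h2⟩⟩
end

section
/- Let $(b_1,\dots,b_n)$ be a list of integers with $n\ge 2$, and suppose the list $L'$ is obtained from $(b_1,\dots,b_n)$ by one blowdown. Then $\det M(L') = \det M(b_1,\dots,b_n)$; that is, toric and half-toric blowdowns leave the determinant of the negative intersection matrix of the string unchanged. -/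
/-!
Expanding the determinant along the first row gives the continuant recursion
`det M(a, b, L) = a * det M(b, L) - det M(L)`, with `det M() = 1` and `det M(a) = a`.
By this recursion, replacing a tail `T` by `T'` preserves the determinant after any prefix, as soon
as it does after every prefix of length at most one (`det_append_congr`). For each kind of blowdown
those two short cases are polynomial identities in `x`, `y`, `det M(y, L₂)` and `det M(L₂)`, the
basic one being `det M(1, y, L₂) = det M(y, L₂) - det M(L₂) = det M(y - 1, L₂)`.
-/

/-- The symmetric tridiagonal integer matrix whose diagonal is the list `L`,
with entries `-1` immediately above and below the diagonal, and `0` elsewhere. -/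
def listTridiagM (L : List ℤ) : Matrix (Fin L.length) (Fin L.length) ℤ :=
  Matrix.of fun i j =>
    if (i : ℕ) = (j : ℕ) then L.get i
    else if (i : ℕ) + 1 = (j : ℕ) ∨ (j : ℕ) + 1 = (i : ℕ) then -1
    else 0

theorem det_listTridiagM_nil : (listTridiagM []).det = 1 :=
  Matrix.det_isEmpty (n := Fin 0)

theorem det_listTridiagM_singleton (a : ℤ) : (listTridiagM [a]).det = a := by
  change Matrix.det (n := Fin 1) _ = a
  rw [Matrix.det_fin_one]
  simp [listTridiagM]

theorem listTridiagM_submatrix_succ (a : ℤ) (L : List ℤ) :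
    (listTridiagM (a :: L)).submatrix (Fin.succ : Fin L.length → Fin (L.length + 1))
      (Fin.succ : Fin L.length → Fin (L.length + 1)) = listTridiagM L := by
  ext i j
  simp [listTridiagM]

/-- The continuant recursion. In the expansion along the first row only the first two columns
contribute; the minor of the second one has first column `(-1, 0, …, 0)`. -/
theorem det_listTridiagM_cons_cons (a b : ℤ) (L : List ℤ) :
    (listTridiagM (a :: b :: L)).det
      = a * (listTridiagM (b :: L)).det - (listTridiagM L).det := by
  have h1 := listTridiagM_submatrix_succ a (b :: L)
  have h2 := listTridiagM_submatrix_succ b L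
  rw [← h2, ← h1]
  have e00 : listTridiagM (a :: b :: L) (0 : Fin (L.length + 2)) (0 : Fin (L.length + 2)) = a := by
    simp [listTridiagM]
  have e01 : listTridiagM (a :: b :: L) (0 : Fin (L.length + 2)) (1 : Fin (L.length + 2)) = -1 := by
    simp [listTridiagM]
  have e10 : listTridiagM (a :: b :: L) (1 : Fin (L.length + 2)) (0 : Fin (L.length + 2)) = -1 := by
    simp [listTridiagM]
  have e0 : ∀ j : Fin L.length, listTridiagM (a :: b :: L) (0 : Fin (L.length + 2))
      (j.succ.succ : Fin (L.length + 2)) = 0 := by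
    intro j; simp [listTridiagM]
  have e0' : ∀ j : Fin L.length, listTridiagM (a :: b :: L)
      (j.succ.succ : Fin (L.length + 2)) (0 : Fin (L.length + 2)) = 0 := by
    intro j; simp [listTridiagM]
  generalize listTridiagM (a :: b :: L) = A at *
  change Matrix (Fin (L.length + 2)) (Fin (L.length + 2)) ℤ at A
  change Matrix.det (n := Fin (L.length + 2)) A
    = a * Matrix.det (n := Fin (L.length + 1)) (A.submatrix Fin.succ Fin.succ)
      - Matrix.det (n := Fin L.length)
        ((A.submatrix Fin.succ Fin.succ).submatrix Fin.succ Fin.succ)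
  clear h1 h2
  generalize L.length = n at *
  have hminor : (A.submatrix Fin.succ (Fin.succAbove 1)).det
      = -((A.submatrix Fin.succ Fin.succ).submatrix Fin.succ Fin.succ).det := by
    rw [Matrix.det_succ_column_zero, Fin.sum_univ_succ]
    have hs : (A.submatrix (Fin.succ : Fin (n+1) → _) (Fin.succAbove 1)).submatrix
        (Fin.succAbove 0) Fin.succ
        = (A.submatrix Fin.succ Fin.succ).submatrix Fin.succ Fin.succ := by
      ext i j
      have hj : (1 : Fin (n + 2)).succAbove j.succ = j.succ.succ := by
        rw [← Fin.succ_zero_eq_one, Fin.succ_succAbove_succ, Fin.succAbove_zero]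
      simp [hj]
    rw [hs]
    simp [e10, e0']
  rw [Matrix.det_succ_row_zero, Fin.sum_univ_succ, Fin.sum_univ_succ]
  simp [e00, e01, e0, hminor, sub_eq_add_neg]

/-- The recursion is of order two in the prefix, so prefixes of length at most one decide. -/
theorem det_append_congr {T T' : List ℤ}
    (h0 : (listTridiagM T').det = (listTridiagM T).det)
    (h1 : ∀ a, (listTridiagM (a :: T')).det = (listTridiagM (a :: T)).det) :
    ∀ P : List ℤ, (listTridiagM (P ++ T')).det = (listTridiagM (P ++ T)).det
  | [] => h0
  | [a] => h1 a
  | a :: b :: P => by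
    have ih1 := det_append_congr h0 h1 (b :: P)
    have ih2 := det_append_congr h0 h1 P
    simp only [List.cons_append] at ih1 ⊢
    rw [det_listTridiagM_cons_cons, det_listTridiagM_cons_cons, ih1, ih2]

theorem det_listTridiagM_sub_one_cons (y : ℤ) (L : List ℤ) :
    (listTridiagM ((y - 1) :: L)).det = (listTridiagM (y :: L)).det - (listTridiagM L).det := by
  cases L with
  | nil => simp only [det_listTridiagM_singleton, det_listTridiagM_nil]
  | cons b L => simp only [det_listTridiagM_cons_cons]; ring

/-- Toric and half-toric blowdowns leave the determinant of the negative
intersection matrix of a string unchanged: if `L'` is obtained from `L`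
(of length `≥ 2`) by one blowdown, then `det M(L') = det M(L)`. -/
theorem det_listTridiagM_blowdown
    (L : List ℤ) (hn : 2 ≤ L.length) (L' : List ℤ) (h : Blowdown L L') :
    (listTridiagM L').det = (listTridiagM L).det := by
  rcases h with ⟨L₁, x, y, L₂, rfl, rfl⟩ | ⟨y, L₂, rfl, rfl⟩ | ⟨L₁, x, rfl, rfl⟩
  · have h0 : (listTridiagM ((x - 1) :: (y - 1) :: L₂)).det
        = (listTridiagM (x :: 1 :: y :: L₂)).det := by
      simp only [det_listTridiagM_cons_cons, det_listTridiagM_sub_one_cons]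
      ring
    refine det_append_congr h0 (fun a => ?_) L₁
    rw [det_listTridiagM_cons_cons, det_listTridiagM_cons_cons a, h0,
      det_listTridiagM_cons_cons 1, det_listTridiagM_sub_one_cons, one_mul]
  · rw [det_listTridiagM_cons_cons, det_listTridiagM_sub_one_cons, one_mul]
  · refine det_append_congr ?_ (fun a => ?_) L₁
    all_goals
      simp only [det_listTridiagM_cons_cons, det_listTridiagM_singleton, det_listTridiagM_nil]
      ring
end

section
/- Let $n \ge 1$, let $b_1,\dots,b_n$ be integers, and let $1 \le k \le n$. Define the symmetric bilinear form $B(x,y) = -x^{\mathsf T} M(b_1,\dots,b_n)\, y$ on $\mathbb{Z}^n$ (so $B(e_i,e_i)=-b_i$ and $B(e_i,e_{i+1})=1$), and set $F_k = \sum_{i=1}^k \Delta_i e_i$ where $e_1,\dots,e_n$ is the standard basis. Then: (i) $B(F_k,F_k) = -\Delta_k \Delta_{k+1}$; (ii) $B(F_k,e_k) = -\Delta_{k+1}$; (iii) if $k < n$, then $B(F_k,e_{k+1}) = \Delta_k$; (iv) $B(F_k,e_i) = 0$ for every $i \le n$ with $i \notin \{k,k+1\}$. -/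
/-!
Everything follows from the row vector `F ᵥ* M`. Writing `f 0 = 0`, `f i = Δ i` for `i ≤ k` and
`f i = 0` for `i > k`, its entry at the `1`-based index `j` is `b j * f j - f (j - 1) - f (j + 1)`
(`sum_mul_tridiagM`), where the two ends of the string need no special treatment because `f`
vanishes at `0` and at `n + 1`. The recurrence for `Δ` kills this for `j < k`; truncation leaves
`Δ (k + 1)` at `j = k` and `-Δ k` at `j = k + 1`. This gives the pairings with basis vectors,
and pairing with `F` itself only sees the entry at `k`, since `F` vanishes at `k + 1`.
-/

open Matrix

/-- A row vector times `tridiagM n b`. The vector is the restriction to `1, …, n` of a function `f`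
that vanishes at `0` and `n + 1`, so that the formula is uniform in `j`. -/
lemma sum_mul_tridiagM (n : ℕ) (b f : ℕ → ℤ) (h0 : f 0 = 0) (hn : f (n + 1) = 0) (j : Fin n) :
    ∑ i : Fin n, f ((i : ℕ) + 1) * tridiagM n b i j =
      b ((j : ℕ) + 1) * f ((j : ℕ) + 1) - f j - f ((j : ℕ) + 2) := by
  obtain ⟨j, hj⟩ := j
  have hsplit : ∀ i : Fin n, f ((i : ℕ) + 1) * tridiagM n b i ⟨j, hj⟩ =
      (if (i : ℕ) = j then b (j + 1) * f (j + 1) else 0) - (if (i : ℕ) + 1 = j then f j else 0)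
        - (if (i : ℕ) = j + 1 then f (j + 2) else 0) := by
    intro i
    simp only [tridiagM, Matrix.of_apply]
    split_ifs <;> first | omega | (simp_all; done) | (simp_all; ring)
  have hdiag : ∑ i : Fin n, (if (i : ℕ) = j then b (j + 1) * f (j + 1) else 0) =
      b (j + 1) * f (j + 1) := by
    rw [Fin.sum_univ_eq_sum_range (fun i => if i = j then b (j + 1) * f (j + 1) else 0)]
    simp [hj]
  have hleft : ∑ i : Fin n, (if (i : ℕ) + 1 = j then f j else 0) = f j := by
    rw [Fin.sum_univ_eq_sum_range (fun i => if i + 1 = j then f j else 0)]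
    cases j with
    | zero => simp [h0]
    | succ m => simp; omega
  have hright : ∑ i : Fin n, (if (i : ℕ) = j + 1 then f (j + 2) else 0) = f (j + 2) := by
    rw [Fin.sum_univ_eq_sum_range (fun i => if i = j + 1 then f (j + 2) else 0)]
    rcases Nat.lt_or_ge (j + 1) n with h | h
    · simp [h]
    · obtain rfl : n = j + 1 := by omega
      simp [hn]
  simp only [hsplit, Finset.sum_sub_distrib, hdiag, hleft, hright]

/-- Intersection numbers of the class `F k = ∑_{i=1}^k Δ i • e i` against the
form `B(x,y) = -xᵀ M(b 1,…,b n) y` on `ℤⁿ` (so `B(eᵢ,eᵢ) = -b i` and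
`B(eᵢ,e_{i+1}) = 1`):
(i) `B(F k, F k) = -Δ k * Δ (k+1)`;
(ii) `B(F k, e k) = -Δ (k+1)`;
(iii) if `k < n`, `B(F k, e (k+1)) = Δ k`;
(iv) `B(F k, e i) = 0` for `i ∉ {k, k+1}`.
Here the standard basis vector `e i` (for the `1`-based index `i`) is
`Pi.single ⟨i-1,_⟩ 1`. -/
theorem Fk_pairings
    (n : ℕ) (hn : 1 ≤ n) (b : ℕ → ℤ) (Δ : ℕ → ℤ)
    (hΔ0 : Δ 0 = 0) (hΔ1 : Δ 1 = 1)
    (hΔrec : ∀ l, 1 ≤ l → l ≤ n → Δ (l + 1) = b l * Δ l - Δ (l - 1))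
    (k : ℕ) (hk1 : 1 ≤ k) (hkn : k ≤ n)
    (B : (Fin n → ℤ) → (Fin n → ℤ) → ℤ)
    (hB : ∀ x y, B x y = -(x ⬝ᵥ (tridiagM n b).mulVec y))
    (F : Fin n → ℤ)
    (hF : ∀ i : Fin n, F i = if (i : ℕ) + 1 ≤ k then Δ ((i : ℕ) + 1) else 0) :
    B F F = -(Δ k * Δ (k + 1)) ∧
    B F (Pi.single (⟨k - 1, by omega⟩ : Fin n) 1) = -Δ (k + 1) ∧
    (∀ hkn' : k < n, B F (Pi.single (⟨k, hkn'⟩ : Fin n) 1) = Δ k) ∧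
    (∀ i : Fin n, (i : ℕ) + 1 ≠ k → (i : ℕ) + 1 ≠ k + 1 →
      B F (Pi.single i 1) = 0) := by
  have hvec : ∀ j : Fin n, (F ᵥ* tridiagM n b) j =
      if (j : ℕ) + 1 = k then Δ (k + 1) else if (j : ℕ) = k then -Δ k else 0 := by
    intro j
    have h := sum_mul_tridiagM n b (fun i => if i ≤ k then Δ i else 0) (by simp [hΔ0])
      (if_neg (by omega)) j
    have hr := hΔrec (j + 1) (by omega) (by omega)
    simp only [Nat.add_sub_cancel] at hr
    simp only [Matrix.vecMul, dotProduct, hF]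
    rw [h]
    rcases lt_trichotomy ((j : ℕ) + 1) k with hj | hj | hj
    · rw [if_pos (by omega), if_pos (by omega), if_pos (by omega), if_neg (by omega),
        if_neg (by omega)]
      linarith
    · subst hj
      simp
      linarith
    · rw [if_neg (show ¬(j : ℕ) + 1 ≤ k by omega), if_neg (show ¬(j : ℕ) + 2 ≤ k by omega),
        if_neg (show ¬(j : ℕ) + 1 = k by omega)]
      by_cases hjk : (j : ℕ) = k
      · simp [hjk]
      · rw [if_neg (by omega), if_neg hjk]
        simp
  have hsingle : ∀ i : Fin n, B F (Pi.single i 1) = -(F ᵥ* tridiagM n b) i := by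
    intro i
    rw [hB, Matrix.dotProduct_mulVec, dotProduct_single_one]
  refine ⟨?_, ?_, ?_, ?_⟩
  · rw [hB, Matrix.dotProduct_mulVec, dotProduct,
      Finset.sum_eq_single (⟨k - 1, by omega⟩ : Fin n)]
    · rw [hvec, hF]
      simp [Nat.sub_add_cancel hk1, mul_comm]
    · intro j _ hj
      have hj' : (j : ℕ) + 1 ≠ k := fun h => hj (Fin.ext (by simp; omega))
      rw [hvec, hF, if_neg hj']
      split_ifs <;> first | omega | simp
    · simp
  · rw [hsingle, hvec, if_pos (by simp; omega)]
  · intro hkn'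
    rw [hsingle, hvec]
    simp
  · intro i h1 h2
    rw [hsingle, hvec, if_neg h1, if_neg (by omega), neg_zero]
end
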